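/- arXiv:1407.0381 — 2 statements merged into one kernel-verified Lean document; each statement's English description precedes it below -/
import Mathlib

section
/- There exist universal constants C1, C2 > 0 such that for all integers k ≥ 2 and n ≥ 2: C1·((min(k/n,1))² + (log k)²/n) ≤ R_plugin(k,n) ≤ C2·((k/n)² + (log(min(k,n)))²/n). -/
open scoped BigOperators
open Real

noncomputable section

/-- The set of probability vectors on `Fin k`. -/
def probVec (k : ℕ) : Set (Fin k → ℝ) := {P | (∀ i, 0 ≤ P i) ∧ (∑ i, P i) = 1}

/-- Shannon entropy `H(P) = ∑ pᵢ log (1/pᵢ)` (natural log, `0·log(1/0) = 0`). -/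
def entropy {k : ℕ} (P : Fin k → ℝ) : ℝ := ∑ i, P i * Real.log (1 / P i)

/-- The multinomial probability mass function of the histogram `N` of `n` i.i.d. samples
from `P`. -/
def multinomialPMF {k : ℕ} (n : ℕ) (P : Fin k → ℝ) (N : Fin k → ℕ) : ℝ :=
  if (∑ i, N i) = n then
    (n.factorial : ℝ) / (∏ i, ((N i).factorial : ℝ)) * ∏ i, P i ^ (N i)
  else 0

/-- Mean squared error of the estimator `est` of the entropy, from the histogram of
`n` i.i.d. samples of `P`. -/
def mseIID {k : ℕ} (n : ℕ) (P : Fin k → ℝ) (est : (Fin k → ℕ) → ℝ) : ℝ :=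
  ∑' N : Fin k → ℕ, multinomialPMF n P N * (est N - entropy P) ^ 2


/-- The plug-in (empirical entropy) estimator from a histogram of `n` samples. -/
def plugIn {k : ℕ} (n : ℕ) (N : Fin k → ℕ) : ℝ :=
  ∑ i, ((N i : ℝ) / n) * Real.log ((n : ℝ) / (N i))

/-- Worst-case quadratic risk of the plug-in estimator. -/
def Rplug (k n : ℕ) : ℝ := ⨆ P : probVec k, mseIID n P.1 (plugIn n)

/-!
The estimation error splits as `Ĥ - H = L - D`, where `L` is the empirical mean of the centred
surprisals `log (1 / P X) - H` and `D` is the Kullback–Leibler divergence of the empirical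
distribution from `P`. The variance of `L` is `varentropy P / n`, and the varentropy is at most
`(log k) ^ 2 + 4`. Each of the `k` terms of `n D` has bounded second moment, so
`E D² = O((k / n)²)`; for `k ≥ n` this also absorbs `(log k) ^ 2 / n`.

For the lower bound, `L` vanishes under the uniform distribution, where the cubic Taylor bound for
`t log t + 1 - t` and the second and third moments of the counts give `E D ≥ k / (12 n)` if
`k ≤ 2 n`. If `k ≥ 2 n`, then `Ĥ ≤ log n` falls short of `H = log k`. A distribution with one heavy
atom has varentropy of order `(log k) ^ 2`, which yields the term `(log k) ^ 2 / n` up to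
`O((k / n)²)`, and the latter is controlled by the uniform case.
-/

/-! ### Expectations over the histogram -/

/-- The expectation `E_P[f(N)]`, where `N` is the histogram of `n` i.i.d. samples from `P`, written
as a finite sum over the histograms of total mass `n`. -/
def histMean {k : ℕ} (n : ℕ) (P : Fin k → ℝ) (f : (Fin k → ℕ) → ℝ) : ℝ :=
  ∑ N ∈ Finset.piAntidiag Finset.univ n, multinomialPMF n P N * f N

section Expectation

variable {k n : ℕ} {P : Fin k → ℝ} {f g : (Fin k → ℕ) → ℝ}

theorem sum_eq_of_mem_piAntidiag {N : Fin k → ℕ} (hN : N ∈ Finset.piAntidiag Finset.univ n) :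
    ∑ i, N i = n :=
  (Finset.mem_piAntidiag.mp hN).1

theorem multinomialPMF_eq_zero_of_sum_ne {N : Fin k → ℕ} (hN : ∑ i, N i ≠ n) :
    multinomialPMF n P N = 0 :=
  if_neg hN

theorem multinomialPMF_eq_zero_of_apply_ne_zero {N : Fin k → ℕ} {i : Fin k} (hP : P i = 0)
    (hN : N i ≠ 0) : multinomialPMF n P N = 0 := by
  have hprod : ∏ j, P j ^ N j = 0 :=
    Finset.prod_eq_zero (Finset.mem_univ i) (by rw [hP, zero_pow hN])
  simp [multinomialPMF, hprod]

theorem multinomialPMF_nonneg (hP : ∀ i, 0 ≤ P i) (N : Fin k → ℕ) :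
    0 ≤ multinomialPMF n P N := by
  have hprod : 0 ≤ ∏ i, P i ^ N i := Finset.prod_nonneg fun i _ => pow_nonneg (hP i) _
  unfold multinomialPMF
  split_ifs <;> positivity

theorem mseIID_eq_histMean (n : ℕ) (P : Fin k → ℝ) (est : (Fin k → ℕ) → ℝ) :
    mseIID n P est = histMean n P fun N => (est N - entropy P) ^ 2 :=
  tsum_eq_sum fun N hN => by
    rw [multinomialPMF_eq_zero_of_sum_ne fun h => hN (by simp [h]), zero_mul]

theorem histMean_add (f g : (Fin k → ℕ) → ℝ) :
    histMean n P (fun N => f N + g N) = histMean n P f + histMean n P g := by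
  simp only [histMean, mul_add, Finset.sum_add_distrib]

theorem histMean_const_mul (c : ℝ) (f : (Fin k → ℕ) → ℝ) :
    histMean n P (fun N => c * f N) = c * histMean n P f := by
  simp only [histMean, Finset.mul_sum, mul_left_comm]

theorem histMean_sum {ι : Type*} (s : Finset ι) (f : ι → (Fin k → ℕ) → ℝ) :
    histMean n P (fun N => ∑ i ∈ s, f i N) = ∑ i ∈ s, histMean n P (f i) := by
  simp only [histMean, Finset.mul_sum]
  exact Finset.sum_comm

theorem histMean_congr
    (h : ∀ N, ∑ i, N i = n → (∀ i, P i = 0 → N i = 0) → f N = g N) :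
    histMean n P f = histMean n P g := by
  refine Finset.sum_congr rfl fun N hN => ?_
  by_cases hsupp : ∀ i, P i = 0 → N i = 0
  · rw [h N (sum_eq_of_mem_piAntidiag hN) hsupp]
  · push Not at hsupp
    obtain ⟨i, hPi, hNi⟩ := hsupp
    simp only [multinomialPMF_eq_zero_of_apply_ne_zero hPi hNi, zero_mul]

theorem histMean_mono (hP : ∀ i, 0 ≤ P i)
    (h : ∀ N, ∑ i, N i = n → (∀ i, P i = 0 → N i = 0) → f N ≤ g N) :
    histMean n P f ≤ histMean n P g := by
  refine Finset.sum_le_sum fun N hN => ?_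
  by_cases hsupp : ∀ i, P i = 0 → N i = 0
  · exact mul_le_mul_of_nonneg_left (h N (sum_eq_of_mem_piAntidiag hN) hsupp)
      (multinomialPMF_nonneg hP N)
  · push Not at hsupp
    obtain ⟨i, hPi, hNi⟩ := hsupp
    simp only [multinomialPMF_eq_zero_of_apply_ne_zero hPi hNi, zero_mul, le_refl]

theorem histMean_zero_samples (P : Fin k → ℝ) (f : (Fin k → ℕ) → ℝ) : histMean 0 P f = f 0 := by
  simp [histMean, multinomialPMF]

theorem prod_apply_add_single {ι M : Type*} [Fintype ι] [DecidableEq ι] [CommMonoid M]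
    (g : ι → ℕ → M) (N : ι → ℕ) (j : ι) {c : M} (hc : g j (N j + 1) = c * g j (N j)) :
    ∏ i, g i ((N + Pi.single j 1 : ι → ℕ) i) = c * ∏ i, g i (N i) := by
  have hterm : ∀ i, g i ((N + Pi.single j 1 : ι → ℕ) i)
      = (if i = j then c else 1) * g i (N i) := by
    intro i
    rcases eq_or_ne i j with rfl | hij
    · simp [hc]
    · simp [hij]
  simp only [hterm, Finset.prod_mul_distrib, Finset.prod_ite_eq', Finset.mem_univ, if_true]

theorem succ_mul_multinomialPMF_add_single (n : ℕ) (P : Fin k → ℝ) (N : Fin k → ℕ) (j : Fin k) :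
    ((N j : ℝ) + 1) * multinomialPMF (n + 1) P (N + Pi.single j 1)
      = (n + 1) * (P j * multinomialPMF n P N) := by
  have hsum : ∑ i, (N + Pi.single j 1 : Fin k → ℕ) i = ∑ i, N i + 1 := by
    simp [Finset.sum_add_distrib]
  by_cases hN : ∑ i, N i = n
  · have hfact := prod_apply_add_single (fun _ m => (m.factorial : ℝ)) N j (c := (N j : ℝ) + 1)
      (by simp [Nat.factorial_succ])
    have hpow := prod_apply_add_single (fun i m => P i ^ m) N j (pow_succ' (P j) (N j))
    have hne : ∏ i, ((N i).factorial : ℝ) ≠ 0 :=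
      Finset.prod_ne_zero_iff.mpr fun i _ => by positivity
    rw [multinomialPMF, multinomialPMF, if_pos (hsum.trans (by rw [hN])), if_pos hN, hfact, hpow,
      Nat.factorial_succ]
    push_cast
    field_simp
  · rw [multinomialPMF_eq_zero_of_sum_ne hN, multinomialPMF_eq_zero_of_sum_ne (by omega)]
    simp

theorem succ_mul_histMean_add_single (j : Fin k) (f : (Fin k → ℕ) → ℝ) :
    (n + 1) * (P j * histMean n P fun N => f (N + Pi.single j 1))
      = histMean (n + 1) P fun N => N j * f N := by
  simp only [histMean, Finset.mul_sum]
  refine Finset.sum_of_injOn (fun N => N + Pi.single j 1)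
    (add_left_injective _).injOn (fun N hN => ?_) (fun N hN hNj => ?_) fun N _ => ?_
  · have hsum := sum_eq_of_mem_piAntidiag hN
    simp [Finset.sum_add_distrib, hsum]
  · have hzero : N j = 0 := by
      by_contra hne
      have hle : Pi.single j 1 ≤ N := by
        intro i
        rcases eq_or_ne i j with rfl | hij
        · simpa using Nat.one_le_iff_ne_zero.mpr hne
        · simp [hij]
      refine hNj ⟨N - Pi.single j 1, ?_, tsub_add_cancel_of_le hle⟩
      have hsum := sum_eq_of_mem_piAntidiag hN
      rw [← tsub_add_cancel_of_le hle] at hsum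
      simpa [Finset.sum_add_distrib] using hsum
    simp [hzero]
  · simp only [Pi.add_apply, Pi.single_eq_same, Nat.cast_add, Nat.cast_one]
    linear_combination -f (N + Pi.single j 1) * succ_mul_multinomialPMF_add_single n P N j

theorem histMean_succ (n : ℕ) (P : Fin k → ℝ) (f : (Fin k → ℕ) → ℝ) :
    histMean (n + 1) P f = ∑ j, P j * histMean n P fun N => f (N + Pi.single j 1) := by
  have hn : (n : ℝ) + 1 ≠ 0 := by positivity
  refine mul_left_cancel₀ hn ?_
  rw [Finset.mul_sum]
  simp only [succ_mul_histMean_add_single]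
  rw [← histMean_sum, ← histMean_const_mul]
  refine histMean_congr fun N hN _ => ?_
  rw [← Finset.sum_mul, ← Nat.cast_sum, hN, Nat.cast_succ]

theorem histMean_const (hP : ∑ i, P i = 1) (n : ℕ) (c : ℝ) : histMean n P (fun _ => c) = c := by
  induction n with
  | zero => rw [histMean_zero_samples]
  | succ n ih => simp only [histMean_succ, ih, ← Finset.sum_mul, hP, one_mul]

theorem sq_histMean_le (hP : P ∈ probVec k) (n : ℕ) (f : (Fin k → ℕ) → ℝ) :
    histMean n P f ^ 2 ≤ histMean n P fun N => f N ^ 2 := by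
  set μ := histMean n P f with hμ
  have hle : histMean n P (fun N => 2 * μ * f N + -μ ^ 2) ≤ histMean n P fun N => f N ^ 2 :=
    histMean_mono hP.1 fun N _ _ => by linarith [sq_nonneg (f N - μ)]
  rw [histMean_add, histMean_const_mul, histMean_const hP.2, ← hμ] at hle
  linarith

end Expectation

/-! ### Moments of centred linear statistics -/

/-- The linear statistic `∑ᵢ Nᵢ aᵢ` of the histogram `N`, i.e. the sum of the scores `a (X_t)` over
the samples `X_1, …, X_n`. -/
def linStat {k : ℕ} (a : Fin k → ℝ) (N : Fin k → ℕ) : ℝ := ∑ i, (N i : ℝ) * a i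

section LinearMoments

variable {k : ℕ} {P a : Fin k → ℝ}

theorem linStat_zero (a : Fin k → ℝ) : linStat a 0 = 0 := by simp [linStat]

theorem linStat_add_single (a : Fin k → ℝ) (N : Fin k → ℕ) (j : Fin k) :
    linStat a (N + Pi.single j 1) = linStat a N + a j := by
  simp [linStat, add_mul, Finset.sum_add_distrib, Pi.single_apply]

theorem histMean_succ_linStat_pow (n : ℕ) (P a : Fin k → ℝ) (m : ℕ) :
    histMean (n + 1) P (fun N => linStat a N ^ m)
      = ∑ l ∈ Finset.range (m + 1),
          m.choose l * (∑ j, P j * a j ^ (m - l)) * histMean n P fun N => linStat a N ^ l := by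
  have hbinom : ∀ j, histMean n P (fun N => (linStat a N + a j) ^ m)
      = ∑ l ∈ Finset.range (m + 1),
          a j ^ (m - l) * m.choose l * histMean n P fun N => linStat a N ^ l := by
    intro j
    simp only [add_pow, histMean_sum, ← histMean_const_mul]
    exact Finset.sum_congr rfl fun l _ => congrArg _ (funext fun N => by ring)
  simp only [histMean_succ, linStat_add_single, hbinom, Finset.mul_sum, Finset.sum_mul]
  rw [Finset.sum_comm]
  exact Finset.sum_congr rfl fun l _ => Finset.sum_congr rfl fun j _ => by ring

theorem histMean_linStat (hP : ∑ i, P i = 1) (ha : ∑ i, P i * a i = 0) (n : ℕ) :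
    histMean n P (linStat a) = 0 := by
  induction n with
  | zero => rw [histMean_zero_samples, linStat_zero]
  | succ n ih =>
    simpa [Finset.sum_range_succ, hP, ha, ih] using histMean_succ_linStat_pow n P a 1

theorem histMean_linStat_sq (hP : ∑ i, P i = 1) (ha : ∑ i, P i * a i = 0) (n : ℕ) :
    histMean n P (fun N => linStat a N ^ 2) = n * ∑ i, P i * a i ^ 2 := by
  induction n with
  | zero => simp [histMean_zero_samples, linStat_zero]
  | succ n ih =>
    rw [histMean_succ_linStat_pow]
    simp only [Finset.sum_range_succ, Finset.sum_range_zero, pow_zero, pow_one, Nat.reduceSub,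
      Nat.choose_self, mul_one, hP, ha, ih, histMean_const hP, Nat.choose_zero_right]
    push_cast
    ring

theorem histMean_linStat_cube (hP : ∑ i, P i = 1) (ha : ∑ i, P i * a i = 0) (n : ℕ) :
    histMean n P (fun N => linStat a N ^ 3) = n * ∑ i, P i * a i ^ 3 := by
  induction n with
  | zero => simp [histMean_zero_samples, linStat_zero]
  | succ n ih =>
    rw [histMean_succ_linStat_pow]
    simp only [Finset.sum_range_succ, Finset.sum_range_zero, pow_zero, pow_one, Nat.reduceSub,
      Nat.choose_self, mul_one, hP, ha, ih, histMean_const hP, Nat.choose_zero_right,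
      histMean_linStat hP ha]
    push_cast
    ring

theorem histMean_linStat_pow_four (hP : ∑ i, P i = 1) (ha : ∑ i, P i * a i = 0) (n : ℕ) :
    histMean n P (fun N => linStat a N ^ 4)
      = 3 * (n * (n - 1)) * (∑ i, P i * a i ^ 2) ^ 2 + n * ∑ i, P i * a i ^ 4 := by
  induction n with
  | zero => simp [histMean_zero_samples, linStat_zero]
  | succ n ih =>
    have hchoose : Nat.choose 4 2 = 6 := rfl
    rw [histMean_succ_linStat_pow]
    simp only [Finset.sum_range_succ, Finset.sum_range_zero, pow_zero, pow_one, Nat.reduceSub,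
      Nat.choose_self, mul_one, hP, ha, ih, histMean_const hP, Nat.choose_zero_right, hchoose,
      histMean_linStat hP ha, histMean_linStat_sq hP ha]
    push_cast
    ring

end LinearMoments

/-- The score whose linear statistic is the centred count `Nᵢ - n Pᵢ`. -/
def centeredIndicator {k : ℕ} (P : Fin k → ℝ) (i j : Fin k) : ℝ := (if j = i then 1 else 0) - P i

section CountMoments

variable {k n : ℕ} {P : Fin k → ℝ}

theorem linStat_centeredIndicator (P : Fin k → ℝ) (i : Fin k) {N : Fin k → ℕ}
    (hN : ∑ j, N j = n) : linStat (centeredIndicator P i) N = N i - n * P i := by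
  simp [linStat, centeredIndicator, mul_sub, ← Finset.sum_mul, ← Nat.cast_sum, hN]

theorem sum_mul_centeredIndicator_pow (hP : ∑ i, P i = 1) (i : Fin k) (m : ℕ) :
    ∑ j, P j * centeredIndicator P i j ^ m = P i * (1 - P i) ^ m + (1 - P i) * (-P i) ^ m := by
  have hsplit : ∀ j, P j * centeredIndicator P i j ^ m
      = P j * (-P i) ^ m + if j = i then P i * ((1 - P i) ^ m - (-P i) ^ m) else 0 := by
    intro j
    rcases eq_or_ne j i with rfl | hij
    · simp only [centeredIndicator, if_true]
      ring
    · simp [centeredIndicator, hij]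
  simp only [hsplit, Finset.sum_add_distrib, ← Finset.sum_mul, hP, Finset.sum_ite_eq',
    Finset.mem_univ, if_true]
  ring

theorem sum_mul_centeredIndicator (hP : ∑ i, P i = 1) (i : Fin k) :
    ∑ j, P j * centeredIndicator P i j = 0 := by
  have h := sum_mul_centeredIndicator_pow hP i 1
  simp only [pow_one] at h
  rw [h]
  ring

theorem histMean_count_sub_pow (n : ℕ) (P : Fin k → ℝ) (i : Fin k) (m : ℕ) :
    histMean n P (fun N => ((N i : ℝ) - n * P i) ^ m)
      = histMean n P fun N => linStat (centeredIndicator P i) N ^ m :=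
  histMean_congr fun _ hN _ => by rw [linStat_centeredIndicator P i hN]

theorem histMean_count_sub_sq (hP : ∑ i, P i = 1) (n : ℕ) (i : Fin k) :
    histMean n P (fun N => ((N i : ℝ) - n * P i) ^ 2) = n * (P i * (1 - P i)) := by
  rw [histMean_count_sub_pow, histMean_linStat_sq hP (sum_mul_centeredIndicator hP i),
    sum_mul_centeredIndicator_pow hP]
  ring

theorem histMean_count_sub_cube (hP : ∑ i, P i = 1) (n : ℕ) (i : Fin k) :
    histMean n P (fun N => ((N i : ℝ) - n * P i) ^ 3)
      = n * (P i * (1 - P i) * (1 - 2 * P i)) := by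
  rw [histMean_count_sub_pow, histMean_linStat_cube hP (sum_mul_centeredIndicator hP i),
    sum_mul_centeredIndicator_pow hP]
  ring

theorem histMean_count_sub_pow_four (hP : ∑ i, P i = 1) (n : ℕ) (i : Fin k) :
    histMean n P (fun N => ((N i : ℝ) - n * P i) ^ 4)
      = 3 * (n * (n - 1)) * (P i * (1 - P i)) ^ 2
        + n * (P i * (1 - P i)) * (1 - 3 * (P i * (1 - P i))) := by
  rw [histMean_count_sub_pow, histMean_linStat_pow_four hP (sum_mul_centeredIndicator hP i),
    sum_mul_centeredIndicator_pow hP, sum_mul_centeredIndicator_pow hP]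
  ring

theorem apply_le_one_of_mem_probVec (hP : P ∈ probVec k) (i : Fin k) : P i ≤ 1 :=
  hP.2 ▸ Finset.single_le_sum (fun j _ => hP.1 j) (Finset.mem_univ i)

theorem histMean_count_sub_pow_four_le (hP : P ∈ probVec k) (n : ℕ) (i : Fin k) :
    histMean n P (fun N => ((N i : ℝ) - n * P i) ^ 4) ≤ 3 * (n * P i) ^ 2 + n * P i := by
  have hp0 := hP.1 i
  have hp1 := apply_le_one_of_mem_probVec hP i
  set v := P i * (1 - P i) with hv
  have hv0 : 0 ≤ v := mul_nonneg hp0 (sub_nonneg.mpr hp1)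
  have hvp : v ≤ P i := mul_le_of_le_one_right hp0 (by linarith)
  rw [histMean_count_sub_pow_four hP.2, ← hv]
  calc 3 * (n * (n - 1)) * v ^ 2 + n * v * (1 - 3 * v)
      ≤ 3 * (n * n) * v ^ 2 + n * v * 1 := by
        gcongr <;> linarith
    _ ≤ 3 * (n * n) * P i ^ 2 + n * P i * 1 := by gcongr
    _ = 3 * (n * P i) ^ 2 + n * P i := by ring

theorem histMean_count_pow_four_le (hP : P ∈ probVec k) {i : Fin k} (hi : n * P i ≤ 1) :
    histMean n P (fun N => (N i : ℝ) ^ 4) ≤ 40 * (n * P i) := by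
  have hpi := hP.1 i
  set lam := (n : ℝ) * P i
  have hlam0 : 0 ≤ lam := by positivity
  calc histMean n P (fun N => (N i : ℝ) ^ 4)
      ≤ histMean n P (fun N => 8 * ((N i : ℝ) - lam) ^ 4 + 8 * lam ^ 4) :=
        histMean_mono hP.1 fun N _ _ => by
          have h := Even.add_pow_le (n := 4) (by decide) (a := (N i : ℝ) - lam) (b := lam)
          norm_num at h
          linarith
    _ ≤ 8 * (3 * lam ^ 2 + lam) + 8 * lam ^ 4 := by
        rw [histMean_add, histMean_const_mul, histMean_const hP.2]
        gcongr
        exact histMean_count_sub_pow_four_le hP n i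
    _ ≤ 8 * (3 * lam + lam) + 8 * lam := by
        gcongr
        · exact pow_le_of_le_one hlam0 hi two_ne_zero
        · exact pow_le_of_le_one hlam0 hi four_ne_zero
    _ = 40 * lam := by ring

end CountMoments

/-! ### Logarithmic inequalities -/

theorem log_sq_le_four_mul {x : ℝ} (hx : 1 ≤ x) : log x ^ 2 ≤ 4 * x := by
  have hx0 : 0 ≤ x := zero_le_one.trans hx
  have hlog : log x ≤ 2 * √x := by
    have h := log_le_rpow_div hx0 one_half_pos
    rw [← sqrt_eq_rpow] at h
    linarith
  calc log x ^ 2 ≤ (2 * √x) ^ 2 := pow_le_pow_left₀ (log_nonneg hx) hlog 2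
    _ = 4 * x := by rw [mul_pow, sq_sqrt hx0]; norm_num

theorem mul_log_sq_le_four {x : ℝ} (hx0 : 0 < x) (hx1 : x ≤ 1) : x * log x ^ 2 ≤ 4 := by
  have h := log_sq_le_four_mul ((one_le_inv₀ hx0).mpr hx1)
  rw [log_inv, neg_sq] at h
  calc x * log x ^ 2 ≤ x * (4 * x⁻¹) := by gcongr
    _ = 4 := by field_simp

open InformationTheory

theorem klFun_le_sub_one_sq {t : ℝ} (ht : 0 ≤ t) : klFun t ≤ (t - 1) ^ 2 := by
  rw [klFun_apply]
  rcases ht.eq_or_lt with rfl | ht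
  · norm_num
  · linarith [mul_le_mul_of_nonneg_left (log_le_sub_one_of_pos ht) ht.le]

theorem sub_one_sq_sub_cube_le_klFun {t : ℝ} (ht : 0 ≤ t) :
    (t - 1) ^ 2 / 2 - (t - 1) ^ 3 / 6 ≤ klFun t := by
  -- The error of the cubic Taylor polynomial at `1` is convex: its second derivative is
  -- `(x - 1) ^ 2 / x`.
  let f : ℝ → ℝ := fun x => klFun x - ((x - 1) ^ 2 / 2 - (x - 1) ^ 3 / 6)
  let f' : ℝ → ℝ := fun x => log x - ((x - 1) - (x - 1) ^ 2 / 2)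
  have hf : ∀ x, 0 < x → HasDerivAt f (f' x) x := by
    intro x hx
    have hsub := (hasDerivAt_id x).sub_const 1
    have hpoly := ((hsub.pow 2).div_const 2).sub ((hsub.pow 3).div_const 6)
    refine ((hasDerivAt_klFun hx.ne').sub hpoly).congr_deriv ?_
    simp only [id, f']
    ring
  have hf' : ∀ x, 0 < x → HasDerivAt f' ((x - 1) ^ 2 / x) x := by
    intro x hx
    have hsub := (hasDerivAt_id x).sub_const 1
    refine ((hasDerivAt_log hx.ne').sub (hsub.sub ((hsub.pow 2).div_const 2))).congr_deriv ?_
    simp only [id]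
    field_simp
    ring
  have hconvex : ConvexOn ℝ (Set.Ici 0) f := by
    refine convexOn_of_hasDerivWithinAt2_nonneg (f' := f') (f'' := fun x => (x - 1) ^ 2 / x)
      (convex_Ici 0) (by fun_prop) ?_ ?_ ?_ <;>
      (intro x hx; rw [interior_Ici] at hx; have hx : 0 < x := hx)
    · exact (hf x hx).hasDerivWithinAt
    · exact (hf' x hx).hasDerivWithinAt
    · positivity
  have hderiv : derivWithin f (Set.Ioi 1) 1 = 0 := by
    rw [(hf 1 one_pos).hasDerivWithinAt.derivWithin (uniqueDiffWithinAt_Ioi 1)]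
    simp [f']
  have hmin : f 1 ≤ f t := hconvex.isMinOn_of_rightDeriv_eq_zero (by simp) hderiv ht
  have hf1 : f 1 = 0 := by simp [f, klFun_one]
  simp only [hf1, f] at hmin
  linarith

theorem mul_klFun_div_sq_le {lam : ℝ} (hlam0 : 0 < lam) (hlam1 : lam ≤ 1) (m : ℕ) :
    (lam * klFun (m / lam)) ^ 2 ≤ (1 - log lam) ^ 2 * (m : ℝ) ^ 4 + lam ^ 2 := by
  rcases Nat.eq_zero_or_pos m with rfl | hm
  · simp [klFun_zero]
  · have hm1 : (1 : ℝ) ≤ m := by exact_mod_cast hm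
    have hm0 : (0 : ℝ) < m := by positivity
    have hlog : log lam ≤ 0 := log_nonpos hlam0.le hlam1
    have hnonneg : 0 ≤ lam * klFun (m / lam) := mul_nonneg hlam0.le (klFun_nonneg (by positivity))
    have hle : lam * klFun (m / lam) ≤ (1 - log lam) * (m : ℝ) ^ 2 :=
      calc lam * klFun (m / lam) = m * (log m - log lam) + lam - m := by
            rw [klFun_apply, log_div hm0.ne' hlam0.ne']
            field_simp
        _ ≤ m * (m - 1 - log lam) + 1 - 1 := by
            gcongr
            exact log_le_sub_one_of_pos hm0
        _ ≤ (1 - log lam) * (m : ℝ) ^ 2 := by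
            nlinarith [mul_nonneg (neg_nonneg.mpr hlog)
              (mul_nonneg hm0.le (sub_nonneg.mpr hm1))]
    calc (lam * klFun (m / lam)) ^ 2 ≤ ((1 - log lam) * (m : ℝ) ^ 2) ^ 2 := by gcongr
      _ = (1 - log lam) ^ 2 * (m : ℝ) ^ 4 := by ring
      _ ≤ _ := le_add_of_nonneg_right (sq_nonneg _)

/-! ### Decomposition of the estimation error -/

/-- The Kullback–Leibler divergence of the empirical distribution `N / n` from `P`, in the form
`∑ Pᵢ φ (Nᵢ / (n Pᵢ))` with `φ t = t log t + 1 - t ≥ 0`. As `x / 0 = 0`, terms with `Pᵢ = 0` vanish: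
this agrees with the divergence on histograms supported where `P` is, the only ones that occur with
positive probability. -/
def empiricalKL {k : ℕ} (n : ℕ) (P : Fin k → ℝ) (N : Fin k → ℕ) : ℝ :=
  ∑ i, P i * klFun (N i / (n * P i))

/-- The surprisal `log (1 / Pᵢ)` of the symbol `i`, centred at its mean `entropy P`. -/
def centeredSurprisal {k : ℕ} (P : Fin k → ℝ) (i : Fin k) : ℝ := log (1 / P i) - entropy P

/-- The variance of the surprisal under `P`. -/
def varentropy {k : ℕ} (P : Fin k → ℝ) : ℝ := ∑ i, P i * centeredSurprisal P i ^ 2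

section Decomposition

variable {k n : ℕ} {P : Fin k → ℝ}

theorem sum_mul_centeredSurprisal (hP : ∑ i, P i = 1) : ∑ i, P i * centeredSurprisal P i = 0 := by
  simp only [centeredSurprisal, mul_sub, Finset.sum_sub_distrib, ← Finset.sum_mul, hP]
  simp [entropy]

theorem div_mul_log_div_eq (hn : 0 < n) {p : ℝ} {m : ℕ} (hm : p = 0 → m = 0) :
    (m : ℝ) / n * log (n / m)
      = m / n * log (1 / p) - p * klFun (m / (n * p)) + (p - m / n) := by
  have hn0 : (n : ℝ) ≠ 0 := by positivity
  rcases eq_or_ne p 0 with rfl | hp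
  · simp [hm rfl]
  rcases eq_or_ne (m : ℝ) 0 with hm0 | hm0
  · simp [hm0, klFun_zero]
  rw [klFun_apply, log_div hn0 hm0, log_div one_ne_zero hp, log_div hm0 (mul_ne_zero hn0 hp),
    log_mul hn0 hp, log_one]
  field_simp
  ring

theorem plugIn_sub_entropy_eq (hP : ∑ i, P i = 1) (hn : 0 < n) {N : Fin k → ℕ}
    (hN : ∑ i, N i = n) (hsupp : ∀ i, P i = 0 → N i = 0) :
    plugIn n N - entropy P = linStat (centeredSurprisal P) N / n - empiricalKL n P N := by
  have hn0 : (n : ℝ) ≠ 0 := by positivity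
  have hNsum : ∑ i, (N i : ℝ) = n := by exact_mod_cast hN
  have hplug : plugIn n N = ∑ i, (N i : ℝ) / n * log (1 / P i) - empiricalKL n P N := by
    simp only [plugIn, empiricalKL, div_mul_log_div_eq hn (hsupp _), Finset.sum_add_distrib,
      Finset.sum_sub_distrib, ← Finset.sum_div, hP, hNsum, div_self hn0, sub_self, add_zero]
  have hlin : linStat (centeredSurprisal P) N / n
      = ∑ i, (N i : ℝ) / n * log (1 / P i) - entropy P := by
    simp only [linStat, centeredSurprisal, mul_sub, Finset.sum_sub_distrib, ← Finset.sum_mul, hNsum,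
      sub_div, mul_div_cancel_left₀ _ hn0, Finset.sum_div, div_mul_eq_mul_div]
  rw [hplug, hlin]
  ring

theorem histMean_sq_linStat_centeredSurprisal_div (hP : ∑ i, P i = 1) (hn : 0 < n) :
    histMean n P (fun N => (linStat (centeredSurprisal P) N / n) ^ 2) = varentropy P / n := by
  have hn0 : (n : ℝ) ≠ 0 := by positivity
  simp only [div_pow, div_eq_inv_mul _ ((n : ℝ) ^ 2), histMean_const_mul,
    histMean_linStat_sq hP (sum_mul_centeredSurprisal hP), varentropy]
  field_simp

theorem histMean_sq_mul_klFun_le_of_one_le (hP : P ∈ probVec k) {i : Fin k} (hi : 1 ≤ n * P i) :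
    histMean n P (fun N => (n * P i * klFun (N i / (n * P i))) ^ 2) ≤ 4 := by
  have hmoment := histMean_count_sub_pow_four_le hP n i
  set lam := (n : ℝ) * P i
  have hlam0 : 0 < lam := zero_lt_one.trans_le hi
  calc histMean n P (fun N => (lam * klFun (N i / lam)) ^ 2)
      ≤ histMean n P (fun N => (lam ^ 2)⁻¹ * ((N i : ℝ) - lam) ^ 4) :=
        histMean_mono hP.1 fun N _ _ => by
          have ht : (0 : ℝ) ≤ N i / lam := div_nonneg (N i).cast_nonneg hlam0.le
          have hkl := klFun_nonneg ht
          calc (lam * klFun (N i / lam)) ^ 2 ≤ (lam * (N i / lam - 1) ^ 2) ^ 2 := by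
                gcongr
                exact klFun_le_sub_one_sq ht
            _ = (lam ^ 2)⁻¹ * ((N i : ℝ) - lam) ^ 4 := by field_simp
    _ ≤ (lam ^ 2)⁻¹ * (3 * lam ^ 2 + lam ^ 2) := by
        rw [histMean_const_mul]
        gcongr
        exact hmoment.trans (by gcongr; exact le_self_pow₀ hi two_ne_zero)
    _ = 4 := by field_simp; norm_num

theorem histMean_sq_mul_klFun_le_of_le_one (hP : P ∈ probVec k) {i : Fin k} (hi0 : 0 < n * P i)
    (hi1 : n * P i ≤ 1) :
    histMean n P (fun N => (n * P i * klFun (N i / (n * P i))) ^ 2) ≤ 401 := by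
  have hmoment := histMean_count_pow_four_le hP hi1
  set lam := (n : ℝ) * P i
  have hlog : lam * (1 - log lam) ^ 2 ≤ 10 := by
    nlinarith [mul_log_sq_le_four hi0 hi1, mul_nonneg hi0.le (sq_nonneg (1 + log lam))]
  calc histMean n P (fun N => (lam * klFun (N i / lam)) ^ 2)
      ≤ histMean n P (fun N => (1 - log lam) ^ 2 * (N i : ℝ) ^ 4 + lam ^ 2) :=
        histMean_mono hP.1 fun N _ _ => mul_klFun_div_sq_le hi0 hi1 (N i)
    _ = (1 - log lam) ^ 2 * histMean n P (fun N => (N i : ℝ) ^ 4) + lam ^ 2 := by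
        rw [histMean_add, histMean_const_mul, histMean_const hP.2]
    _ ≤ (1 - log lam) ^ 2 * (40 * lam) + 1 := by
        gcongr
        exact pow_le_one₀ hi0.le hi1
    _ ≤ 401 := by linarith

theorem histMean_sq_mul_klFun_le (hP : P ∈ probVec k) (n : ℕ) (i : Fin k) :
    histMean n P (fun N => (n * P i * klFun (N i / (n * P i))) ^ 2) ≤ 401 := by
  have hlam : 0 ≤ n * P i := mul_nonneg n.cast_nonneg (hP.1 i)
  rcases hlam.eq_or_lt with h0 | h0
  · simp only [← h0, zero_mul, ne_eq, OfNat.ofNat_ne_zero, not_false_eq_true, zero_pow,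
      histMean_const hP.2]
    norm_num
  rcases le_total 1 (n * P i) with h1 | h1
  · exact (histMean_sq_mul_klFun_le_of_one_le hP h1).trans (by norm_num)
  · exact histMean_sq_mul_klFun_le_of_le_one hP h0 h1

theorem histMean_sq_empiricalKL_le (hP : P ∈ probVec k) (hn : 0 < n) :
    histMean n P (fun N => empiricalKL n P N ^ 2) ≤ 401 * ((k : ℝ) / n) ^ 2 := by
  calc histMean n P (fun N => empiricalKL n P N ^ 2)
      ≤ histMean n P (fun N =>
          (k / (n : ℝ) ^ 2) * ∑ i, (n * P i * klFun (N i / (n * P i))) ^ 2) :=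
        histMean_mono hP.1 fun N _ _ => by
          have hCS := sq_sum_le_card_mul_sum_sq (s := Finset.univ)
            (f := fun i => P i * klFun (N i / (n * P i)))
          rw [Finset.card_univ, Fintype.card_fin] at hCS
          refine hCS.trans_eq ?_
          simp only [mul_assoc (n : ℝ) (P _) (klFun _), mul_pow (n : ℝ), ← Finset.mul_sum]
          rw [← mul_assoc, div_mul_cancel₀ _ (by positivity)]
    _ ≤ k / (n : ℝ) ^ 2 * ∑ _i : Fin k, 401 := by
        rw [histMean_const_mul, histMean_sum]
        gcongr with i
        exact histMean_sq_mul_klFun_le hP n i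
    _ = 401 * ((k : ℝ) / n) ^ 2 := by
        rw [Finset.sum_const, Finset.card_univ, Fintype.card_fin, nsmul_eq_mul]
        ring

end Decomposition

/-! ### Risk bounds -/

section Risk

variable {k n : ℕ} {P : Fin k → ℝ}

theorem mseIID_plugIn_le (hP : P ∈ probVec k) (hn : 0 < n) :
    mseIID n P (plugIn n) ≤ 2 * (varentropy P / n) + 802 * ((k : ℝ) / n) ^ 2 := by
  calc mseIID n P (plugIn n) = histMean n P (fun N => (plugIn n N - entropy P) ^ 2) :=
        mseIID_eq_histMean n P _
    _ ≤ histMean n P (fun N => 2 * (linStat (centeredSurprisal P) N / n) ^ 2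
          + 2 * empiricalKL n P N ^ 2) :=
        histMean_mono hP.1 fun N hN hsupp => by
          rw [plugIn_sub_entropy_eq hP.2 hn hN hsupp]
          linarith [sq_nonneg (linStat (centeredSurprisal P) N / n + empiricalKL n P N)]
    _ = 2 * (varentropy P / n) + 2 * histMean n P (fun N => empiricalKL n P N ^ 2) := by
        rw [histMean_add, histMean_const_mul, histMean_const_mul,
          histMean_sq_linStat_centeredSurprisal_div hP.2 hn]
    _ ≤ 2 * (varentropy P / n) + 802 * ((k : ℝ) / n) ^ 2 := by
        linarith [histMean_sq_empiricalKL_le hP hn]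

theorem varentropy_div_sub_le_mseIID_plugIn (hP : P ∈ probVec k) (hn : 0 < n) :
    varentropy P / n / 2 - 401 * ((k : ℝ) / n) ^ 2 ≤ mseIID n P (plugIn n) := by
  have hpoint : varentropy P / n
      ≤ histMean n P (fun N => 2 * (plugIn n N - entropy P) ^ 2 + 2 * empiricalKL n P N ^ 2) := by
    rw [← histMean_sq_linStat_centeredSurprisal_div hP.2 hn]
    refine histMean_mono hP.1 fun N hN hsupp => ?_
    rw [plugIn_sub_entropy_eq hP.2 hn hN hsupp]
    linarith [sq_nonneg (linStat (centeredSurprisal P) N / n - 2 * empiricalKL n P N)]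
  rw [histMean_add, histMean_const_mul, histMean_const_mul, ← mseIID_eq_histMean] at hpoint
  linarith [histMean_sq_empiricalKL_le hP hn]

theorem varentropy_le_sum_sq_sub (hP : ∑ i, P i = 1) (c : ℝ) :
    varentropy P ≤ ∑ i, P i * (log (1 / P i) - c) ^ 2 := by
  have hshift : ∑ i, P i * (log (1 / P i) - c) ^ 2
      = varentropy P + 2 * (entropy P - c) * ∑ i, P i * centeredSurprisal P i
        + (entropy P - c) ^ 2 * ∑ i, P i := by
    rw [varentropy, Finset.mul_sum, Finset.mul_sum, ← Finset.sum_add_distrib,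
      ← Finset.sum_add_distrib]
    exact Finset.sum_congr rfl fun i _ => by
      rw [centeredSurprisal]
      ring
  rw [hshift, sum_mul_centeredSurprisal hP, hP]
  linarith [sq_nonneg (entropy P - c)]

theorem mul_sq_log_one_div_sub_log_le {p x : ℝ} (hp0 : 0 ≤ p) (hp1 : p ≤ 1) (hx : 0 < x) :
    p * (log (1 / p) - log x) ^ 2 ≤ p * log x ^ 2 + 4 / x := by
  rcases hp0.eq_or_lt with rfl | hp0
  · simp only [zero_mul, zero_add]
    positivity
  have hlog : (log (1 / p) - log x) ^ 2 = log (x * p) ^ 2 := by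
    rw [one_div, log_inv, log_mul hx.ne' hp0.ne']
    ring
  rw [hlog]
  rcases le_total (x * p) 1 with h | h
  · calc p * log (x * p) ^ 2 = x * p * log (x * p) ^ 2 / x := by field_simp
      _ ≤ 4 / x := by gcongr; exact mul_log_sq_le_four (by positivity) h
      _ ≤ p * log x ^ 2 + 4 / x := le_add_of_nonneg_left (by positivity)
  · calc p * log (x * p) ^ 2 ≤ p * log x ^ 2 := by
          gcongr
          · exact log_nonneg h
          · exact mul_le_of_le_one_right hx.le hp1
      _ ≤ p * log x ^ 2 + 4 / x := le_add_of_nonneg_right (by positivity)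

theorem varentropy_le (hP : P ∈ probVec k) : varentropy P ≤ log k ^ 2 + 4 := by
  have hk : (k : ℝ) ≠ 0 := by
    rintro hk
    obtain rfl : k = 0 := by exact_mod_cast hk
    simpa using hP.2
  calc varentropy P ≤ ∑ i, P i * (log (1 / P i) - log k) ^ 2 := varentropy_le_sum_sq_sub hP.2 _
    _ ≤ ∑ i, (P i * log k ^ 2 + 4 / k) := Finset.sum_le_sum fun i _ =>
        mul_sq_log_one_div_sub_log_le (hP.1 i) (apply_le_one_of_mem_probVec hP i) (by positivity)
    _ = log k ^ 2 + 4 := by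
        rw [Finset.sum_add_distrib, ← Finset.sum_mul, hP.2, one_mul, Finset.sum_const,
          Finset.card_univ, Fintype.card_fin, nsmul_eq_mul, mul_div_cancel₀ _ hk]

theorem mseIID_plugIn_le_log_sq (hP : P ∈ probVec k) (hn : 0 < n) :
    mseIID n P (plugIn n) ≤ 2 * ((log k ^ 2 + 4) / n) + 802 * ((k : ℝ) / n) ^ 2 :=
  (mseIID_plugIn_le hP hn).trans (by gcongr; exact varentropy_le hP)

theorem mseIID_plugIn_le_Rplug (hP : P ∈ probVec k) (hn : 0 < n) :
    mseIID n P (plugIn n) ≤ Rplug k n :=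
  le_ciSup (f := fun Q : probVec k => mseIID n Q.1 (plugIn n))
    ⟨_, Set.forall_mem_range.mpr fun Q => mseIID_plugIn_le_log_sq Q.2 hn⟩ ⟨P, hP⟩

end Risk

theorem log_sq_add_four_le {x : ℝ} (hx : 2 ≤ x) : log x ^ 2 + 4 ≤ 10 * log x ^ 2 := by
  have hlog : 0.69 ≤ log x := by linarith [log_two_gt_d9, log_le_log two_pos hx]
  linarith [pow_le_pow_left₀ (by norm_num) hlog 2]

theorem log_sq_div_le_log_min_sq_div_add {x y : ℝ} (hx : 1 ≤ x) (hy : 0 < y) :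
    log x ^ 2 / y ≤ log (min x y) ^ 2 / y + 4 * (x / y) ^ 2 := by
  rcases le_total x y with h | h
  · rw [min_eq_left h]
    exact le_add_of_nonneg_right (by positivity)
  · calc log x ^ 2 / y ≤ 4 * x / y := by gcongr; exact log_sq_le_four_mul hx
      _ = 4 * (x / y) := mul_div_assoc 4 x y
      _ ≤ 4 * (x / y) ^ 2 := by gcongr; exact le_self_pow₀ ((one_le_div₀ hy).mpr h) two_ne_zero
      _ ≤ log (min x y) ^ 2 / y + 4 * (x / y) ^ 2 := le_add_of_nonneg_left (by positivity)

theorem Rplug_le {k n : ℕ} (hk : 2 ≤ k) (hn : 0 < n) :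
    Rplug k n ≤ 882 * (((k : ℝ) / n) ^ 2 + log (min (k : ℝ) n) ^ 2 / n) := by
  have hk2 : (2 : ℝ) ≤ k := by exact_mod_cast hk
  have hn0 : (0 : ℝ) < n := by exact_mod_cast hn
  have hmin0 : 0 ≤ log (min (k : ℝ) n) ^ 2 / n := by positivity
  refine Real.iSup_le (fun Q => ?_) (by positivity)
  calc mseIID n Q.1 (plugIn n) ≤ 2 * ((log k ^ 2 + 4) / n) + 802 * ((k : ℝ) / n) ^ 2 :=
        mseIID_plugIn_le_log_sq Q.2 hn
    _ ≤ 2 * (10 * log k ^ 2 / n) + 802 * ((k : ℝ) / n) ^ 2 := by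
        gcongr
        exact log_sq_add_four_le hk2
    _ = 20 * (log k ^ 2 / n) + 802 * ((k : ℝ) / n) ^ 2 := by ring
    _ ≤ 20 * (log (min (k : ℝ) n) ^ 2 / n + 4 * ((k : ℝ) / n) ^ 2) + 802 * ((k : ℝ) / n) ^ 2 := by
        gcongr
        exact log_sq_div_le_log_min_sq_div_add (by linarith) hn0
    _ ≤ 882 * (((k : ℝ) / n) ^ 2 + log (min (k : ℝ) n) ^ 2 / n) := by linarith

/-! ### Lower bounds -/

/-- The uniform distribution on `k` symbols, which exhibits the bias of the plug-in estimator. -/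
def uniformProb (k : ℕ) : Fin k → ℝ := fun _ => 1 / k

/-- The distribution on `m + 1` symbols with one atom of mass `2 / 3` and the rest spread evenly.
Its surprisal takes two values about `log m` apart, which makes its varentropy of the maximal order
`(log m) ^ 2`. -/
def spikedProb (m : ℕ) : Fin (m + 1) → ℝ := Fin.cons (2 / 3) fun _ => 1 / (3 * m)

section Lower

variable {k n m : ℕ} {P : Fin k → ℝ}

theorem uniformProb_mem_probVec (hk : k ≠ 0) : uniformProb k ∈ probVec k := by
  refine ⟨fun i => by unfold uniformProb; positivity, ?_⟩
  simp [uniformProb, hk]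

theorem entropy_uniformProb (hk : k ≠ 0) : entropy (uniformProb k) = log k := by
  simp [entropy, uniformProb, hk]

theorem centeredSurprisal_uniformProb (hk : k ≠ 0) (i : Fin k) :
    centeredSurprisal (uniformProb k) i = 0 := by
  simp [centeredSurprisal, entropy_uniformProb hk, uniformProb]

theorem one_div_twelve_le_histMean_mul_klFun (hP : P ∈ probVec k) {i : Fin k}
    (hi : P i ≤ 1 / 2) (hni : 1 / 2 ≤ n * P i) :
    1 / 12 ≤ histMean n P (fun N => n * P i * klFun (N i / (n * P i))) := by
  have hpi := hP.1 i
  have hsq := histMean_count_sub_sq hP.2 n i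
  have hcube := histMean_count_sub_cube hP.2 n i
  simp only [← mul_assoc] at hsq hcube
  set lam := (n : ℝ) * P i
  have hlam0 : 0 < lam := by linarith
  have hinv : lam⁻¹ ≤ 2 := inv_le_of_inv_le₀ two_pos (by linarith)
  calc (1 : ℝ) / 12 ≤ 1 / 2 * (1 / 2 - 1 / 6 * 2) := by norm_num
    _ ≤ (1 - P i) * (1 / 2 - 1 / 6 * lam⁻¹) := by
        gcongr <;> linarith
    _ ≤ (1 - P i) * (1 / 2 - (1 - 2 * P i) / 6 * lam⁻¹) := by
        gcongr <;> linarith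
    _ = (2 * lam)⁻¹ * (lam * (1 - P i))
          + -(6 * lam ^ 2)⁻¹ * (lam * (1 - P i) * (1 - 2 * P i)) := by
        field_simp
        ring
    _ = histMean n P (fun N => (2 * lam)⁻¹ * ((N i : ℝ) - lam) ^ 2
          + -(6 * lam ^ 2)⁻¹ * ((N i : ℝ) - lam) ^ 3) := by
        rw [histMean_add, histMean_const_mul, histMean_const_mul, hsq, hcube]
    _ ≤ histMean n P (fun N => lam * klFun (N i / lam)) :=
        histMean_mono hP.1 fun N _ _ => by
          have ht : (0 : ℝ) ≤ N i / lam := div_nonneg (N i).cast_nonneg hlam0.le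
          calc _ = lam * ((N i / lam - 1) ^ 2 / 2 - (N i / lam - 1) ^ 3 / 6) := by
                field_simp
                ring
            _ ≤ lam * klFun (N i / lam) := by
                gcongr
                exact sub_one_sq_sub_cube_le_klFun ht

theorem le_histMean_empiricalKL_uniformProb (hk : 2 ≤ k) (hn : 0 < n) (hkn : k ≤ 2 * n) :
    (k : ℝ) / n / 12 ≤ histMean n (uniformProb k) (empiricalKL n (uniformProb k)) := by
  have hk2 : (2 : ℝ) ≤ k := by exact_mod_cast hk
  have hkn' : (k : ℝ) ≤ 2 * n := by exact_mod_cast hkn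
  have hP := uniformProb_mem_probVec (k := k) (by omega)
  have hterm : ∀ i, (n : ℝ)⁻¹ * (1 / 12)
      ≤ histMean n (uniformProb k) fun N =>
          uniformProb k i * klFun (N i / (n * uniformProb k i)) := by
    intro i
    have hscale : ∀ N : Fin k → ℕ, uniformProb k i * klFun (N i / (n * uniformProb k i))
        = (n : ℝ)⁻¹ * (n * uniformProb k i * klFun (N i / (n * uniformProb k i))) := by
      intro N
      rw [mul_assoc, inv_mul_cancel_left₀ (by positivity)]
    simp only [hscale]
    rw [histMean_const_mul]
    gcongr
    refine one_div_twelve_le_histMean_mul_klFun hP (one_div_le_one_div_of_le two_pos hk2) ?_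
    rw [uniformProb, mul_one_div, le_div_iff₀ (by positivity)]
    linarith
  calc (k : ℝ) / n / 12 = ∑ _i : Fin k, (n : ℝ)⁻¹ * (1 / 12) := by
        rw [Finset.sum_const, Finset.card_univ, Fintype.card_fin, nsmul_eq_mul]
        ring
    _ ≤ ∑ i, histMean n (uniformProb k) fun N =>
          uniformProb k i * klFun (N i / (n * uniformProb k i)) :=
        Finset.sum_le_sum fun i _ => hterm i
    _ = histMean n (uniformProb k) (empiricalKL n (uniformProb k)) := (histMean_sum _ _).symm

theorem div_sq_le_Rplug (hk : 2 ≤ k) (hn : 0 < n) (hkn : k ≤ 2 * n) :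
    ((k : ℝ) / n) ^ 2 ≤ 144 * Rplug k n := by
  have hk0 : k ≠ 0 := by omega
  have hP := uniformProb_mem_probVec hk0
  have herror : mseIID n (uniformProb k) (plugIn n)
      = histMean n (uniformProb k) fun N => empiricalKL n (uniformProb k) N ^ 2 := by
    rw [mseIID_eq_histMean]
    refine histMean_congr fun N hN hsupp => ?_
    rw [plugIn_sub_entropy_eq hP.2 hn hN hsupp]
    simp [linStat, centeredSurprisal_uniformProb hk0]
  have hbias : ((k : ℝ) / n / 12) ^ 2 ≤ Rplug k n :=
    calc ((k : ℝ) / n / 12) ^ 2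
        ≤ histMean n (uniformProb k) (empiricalKL n (uniformProb k)) ^ 2 := by
          gcongr
          exact le_histMean_empiricalKL_uniformProb hk hn hkn
      _ ≤ mseIID n (uniformProb k) (plugIn n) := herror ▸ sq_histMean_le hP n _
      _ ≤ Rplug k n := mseIID_plugIn_le_Rplug hP hn
  linarith

theorem plugIn_le_log (hn : 0 < n) {N : Fin k → ℕ} (hN : ∑ i, N i = n) :
    plugIn n N ≤ log n := by
  have hNsum : ∑ i, (N i : ℝ) = n := by exact_mod_cast hN
  calc plugIn n N ≤ ∑ i, (N i : ℝ) / n * log n := by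
        refine Finset.sum_le_sum fun i _ => ?_
        rcases Nat.eq_zero_or_pos (N i) with h | h
        · simp [h]
        · gcongr
          exact div_le_self n.cast_nonneg (by exact_mod_cast h)
    _ = log n := by
        rw [← Finset.sum_mul, ← Finset.sum_div, hNsum, div_self (by positivity), one_mul]

theorem sq_log_sub_log_le_Rplug (hn : 0 < n) (hnk : n ≤ k) :
    (log k - log n) ^ 2 ≤ Rplug k n := by
  have hk0 : k ≠ 0 := by omega
  have hP := uniformProb_mem_probVec hk0
  have hlog : log n ≤ log k := log_le_log (by positivity) (by exact_mod_cast hnk)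
  calc (log k - log n) ^ 2 = histMean n (uniformProb k) (fun _ => (log k - log n) ^ 2) :=
        (histMean_const hP.2 n _).symm
    _ ≤ histMean n (uniformProb k) (fun N => (plugIn n N - entropy (uniformProb k)) ^ 2) :=
        histMean_mono hP.1 fun N hN _ => by
          rw [entropy_uniformProb hk0, sub_sq_comm (plugIn n N)]
          have := plugIn_le_log hn hN
          gcongr
    _ = mseIID n (uniformProb k) (plugIn n) := (mseIID_eq_histMean n _ _).symm
    _ ≤ Rplug k n := mseIID_plugIn_le_Rplug hP hn

theorem sum_spikedProb_mul (hm : m ≠ 0) (f : ℝ → ℝ) :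
    ∑ i, spikedProb m i * f (spikedProb m i)
      = 2 / 3 * f (2 / 3) + 1 / 3 * f (1 / (3 * m)) := by
  rw [Fin.sum_univ_succ]
  simp only [spikedProb, Fin.cons_zero, Fin.cons_succ, Finset.sum_const, Finset.card_univ,
    Fintype.card_fin, nsmul_eq_mul]
  field_simp

theorem spikedProb_mem_probVec (hm : m ≠ 0) : spikedProb m ∈ probVec (m + 1) := by
  constructor
  · refine Fin.cases ?_ fun j => ?_
    · norm_num [spikedProb]
    · rw [spikedProb, Fin.cons_succ]
      positivity
  · have hsum := sum_spikedProb_mul hm fun _ => 1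
    norm_num at hsum
    exact hsum

theorem log_sq_le_varentropy_spikedProb (hm : m ≠ 0) :
    2 / 9 * log (m + 1 : ℕ) ^ 2 ≤ varentropy (spikedProb m) := by
  have hm1 : (1 : ℝ) ≤ m := by exact_mod_cast Nat.one_le_iff_ne_zero.mpr hm
  set b := log (1 / (2 / 3))
  set c := log (1 / (1 / (3 * m)))
  have hgap : log (m + 1 : ℕ) ≤ c - b := by
    rw [← log_div (by positivity) (by positivity)]
    refine log_le_log (by positivity) ?_
    push_cast
    field_simp
    linarith
  set H := entropy (spikedProb m)
  have hvar : varentropy (spikedProb m) = 2 / 3 * (b - H) ^ 2 + 1 / 3 * (c - H) ^ 2 :=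
    sum_spikedProb_mul hm fun p => (log (1 / p) - H) ^ 2
  calc 2 / 9 * log (m + 1 : ℕ) ^ 2 ≤ 2 / 9 * (c - b) ^ 2 := by
        gcongr
    _ ≤ 2 / 3 * (b - H) ^ 2 + 1 / 3 * (c - H) ^ 2 := by
        linarith [sq_nonneg (2 * (b - H) + (c - H))]
    _ = varentropy (spikedProb m) := hvar.symm

theorem log_sq_div_le_Rplug (hk : 2 ≤ k) (hn : 0 < n) :
    log k ^ 2 / n ≤ 9 * (Rplug k n + 401 * ((k : ℝ) / n) ^ 2) := by
  obtain ⟨m, rfl⟩ : ∃ m, k = m + 1 := Nat.exists_eq_add_one.mpr (by omega)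
  have hm : m ≠ 0 := by omega
  have hP := spikedProb_mem_probVec hm
  have hvar : 2 / 9 * log (m + 1 : ℕ) ^ 2 / n ≤ varentropy (spikedProb m) / n := by
    gcongr
    exact log_sq_le_varentropy_spikedProb hm
  rw [mul_div_assoc] at hvar
  linarith [varentropy_div_sub_le_mseIID_plugIn hP hn, mseIID_plugIn_le_Rplug hP hn]

theorem log_sq_div_le_two_mul_sq_log_sub_log_add {x y : ℝ} (hy : 1 ≤ y) :
    log x ^ 2 / y ≤ 2 * (log x - log y) ^ 2 + 8 := by
  rw [div_le_iff₀ (by linarith)]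
  calc log x ^ 2 ≤ 2 * (log x - log y) ^ 2 + 2 * log y ^ 2 := by
        linarith [sq_nonneg (log x - 2 * log y)]
    _ ≤ 2 * (log x - log y) ^ 2 * y + 2 * (4 * y) := by
        refine add_le_add (le_mul_of_one_le_right (by positivity) hy) ?_
        gcongr
        exact log_sq_le_four_mul hy
    _ = (2 * (log x - log y) ^ 2 + 8) * y := by ring

theorem le_Rplug (hk : 2 ≤ k) (hn : 0 < n) :
    1 / 1000000 * (min ((k : ℝ) / n) 1 ^ 2 + log k ^ 2 / n) ≤ Rplug k n := by
  have hn1 : (1 : ℝ) ≤ n := by exact_mod_cast hn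
  have hmin0 : 0 ≤ min ((k : ℝ) / n) 1 := by positivity
  rcases le_total k (2 * n) with h | h
  · have hmin : min ((k : ℝ) / n) 1 ^ 2 ≤ ((k : ℝ) / n) ^ 2 := by
      gcongr
      exact min_le_left _ _
    linarith [sq_nonneg ((k : ℝ) / n), div_sq_le_Rplug hk hn h, log_sq_div_le_Rplug hk hn]
  · have hnk : (2 : ℝ) * n ≤ k := by exact_mod_cast h
    have hmin : min ((k : ℝ) / n) 1 ^ 2 ≤ 1 := pow_le_one₀ hmin0 (min_le_right _ _)
    have hgap : 0.69 ≤ log k - log n := by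
      have hlog := log_le_log (by positivity) hnk
      rw [log_mul two_ne_zero (by positivity)] at hlog
      linarith [log_two_gt_d9]
    linarith [pow_le_pow_left₀ (by norm_num) hgap 2, sq_log_sub_log_le_Rplug hn (by omega : n ≤ k),
      log_sq_div_le_two_mul_sq_log_sub_log_add (x := k) hn1]

end Lower

/-- non-asymptotic risk bounds for the plug-in estimator. -/
theorem plugin_risk_rate :
    ∃ C1 C2 : ℝ, 0 < C1 ∧ 0 < C2 ∧
      ∀ k n : ℕ, 2 ≤ k → 2 ≤ n →
        C1 * ((min ((k : ℝ) / n) 1) ^ 2 + (Real.log k) ^ 2 / n) ≤ Rplug k n ∧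
        Rplug k n ≤ C2 * (((k : ℝ) / n) ^ 2 + (Real.log (min (k : ℝ) n)) ^ 2 / n) := by
  exact ⟨1 / 1000000, 882, by norm_num, by norm_num, fun k n hk hn =>
    ⟨le_Rplug hk (two_pos.trans_le hn), Rplug_le hk (two_pos.trans_le hn)⟩⟩
end
end

section
/- Let −∞ < a < b < ∞, let g be a continuous real-valued function on [a,b], and let L ∈ ℕ. Then sup{ E[g(X)] − E[g(X')] : X, X' random variables with values in [a,b] satisfying E[X^j] = E[X'^j] for j = 1,...,L } = 2·E_L(g,[a,b]), and the supremum is attained by some pair of random variables. -/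
open scoped BigOperators
open Real MeasureTheory

noncomputable section

/-- Best uniform polynomial approximation error of `f` on `[a,b]` by polynomials of
degree at most `L`. -/
def bestApproxError (L : ℕ) (f : ℝ → ℝ) (a b : ℝ) : ℝ :=
  ⨅ p : {p : Polynomial ℝ // p.natDegree ≤ L},
    ⨆ x : Set.Icc a b, |f ↑x - Polynomial.eval (↑x : ℝ) p.1|

/-!
Subtracting an approximant `v` from `g` leaves the difference of the two expectations unchanged, so
it is at most `2 * ‖g - v‖`. Conversely, Hahn–Banach gives a functional `l` of norm at most one that
annihilates the approximants and takes at `g` the distance from `g` to them. It annihilates the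
constants, so `2 * l f ≤ 2 * ‖f - c‖`, which for the midrange `c` of `f` is the oscillation of `f`.
The oscillation is the support function of the set of differences of two probability measures. This
set is convex and weak-* compact, hence contains `2 • l`, and two measures with difference `2 • l`
are extremal.
-/

open Metric Set
open scoped Pointwise

theorem exists_dual_eq_infDist (𝕜 : Type*) [RCLike 𝕜] {E : Type*} [SeminormedAddCommGroup E]
    [NormedSpace 𝕜 E] (V : Submodule 𝕜 E) (x : E) :
    ∃ l : StrongDual 𝕜 E, ‖l‖ ≤ 1 ∧ (∀ v ∈ V, l v = 0) ∧ l x = (infDist x V : ℝ) := by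
  obtain ⟨q, hq_norm, hq⟩ := exists_dual_vector'' 𝕜 (V.mkQ x)
  refine ⟨q.comp V.mkQL, ?_, fun v hv => ?_, ?_⟩
  · refine ContinuousLinearMap.opNorm_le_bound _ zero_le_one fun y => ?_
    exact q.le_of_opNorm_le_of_le hq_norm (Submodule.Quotient.norm_mk_le V y)
  · exact (congrArg q ((Submodule.Quotient.mk_eq_zero V).2 hv)).trans (map_zero q)
  · exact hq.trans (congrArg _ (QuotientAddGroup.norm_mk x))

theorem mem_of_convex_isClosed_of_forall_exists_le {E : Type*} [AddCommGroup E] [Module ℝ E]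
    [TopologicalSpace E] {D : Set (WeakDual ℝ E)} (hD : Convex ℝ D) (hDc : IsClosed D)
    {l : WeakDual ℝ E} (hl : ∀ x, ∃ φ ∈ D, l x ≤ φ x) : l ∈ D := by
  by_contra hlD
  have : LocallyConvexSpace ℝ (WeakDual ℝ E) := WeakBilin.locallyConvexSpace
  obtain ⟨F, u, hFD, hFl⟩ := geometric_hahn_banach_closed_point hD hDc hlD
  obtain ⟨x, rfl⟩ := LinearMap.dualEmbedding_surjective (topDualPairing ℝ E) F
  obtain ⟨φ, hφ, hle⟩ := hl x
  exact (hle.trans_lt ((hFD φ hφ).trans hFl)).false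

section Compact

variable {X : Type*} [TopologicalSpace X] [CompactSpace X]

theorem exists_two_mul_norm_sub_const_le [Nonempty X] (f : C(X, ℝ)) :
    ∃ x y c, 2 * ‖f - ContinuousMap.const X c‖ ≤ f x - f y := by
  obtain ⟨x, -, hx⟩ := isCompact_univ.exists_isMaxOn univ_nonempty f.continuous.continuousOn
  obtain ⟨y, -, hy⟩ := isCompact_univ.exists_isMinOn univ_nonempty f.continuous.continuousOn
  have hle : ∀ z, f y ≤ f z ∧ f z ≤ f x := fun z => ⟨hy (mem_univ z), hx (mem_univ z)⟩
  refine ⟨x, y, (f x + f y) / 2, ?_⟩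
  rw [← le_div_iff₀' two_pos, ContinuousMap.norm_le _ (by linarith [hle x])]
  intro z
  rw [ContinuousMap.sub_apply, ContinuousMap.const_apply, Real.norm_eq_abs, abs_le]
  constructor <;> linarith [hle z]

variable [MeasurableSpace X]

theorem abs_integral_le_norm (P : ProbabilityMeasure X) (f : C(X, ℝ)) :
    |∫ x, f x ∂P| ≤ ‖f‖ := by
  simpa using norm_integral_le_of_norm_le_const (μ := (P : Measure X)) (f := f)
    (.of_forall f.norm_coe_le_norm)

variable [BorelSpace X]

theorem integrable_continuousMap (μ : Measure X) [IsFiniteMeasure μ] (f : C(X, ℝ)) :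
    Integrable f μ :=
  f.continuous.integrable_of_hasCompactSupport (.of_compactSpace f)

/-- Integration against `P`, as a functional on `C(X, ℝ)`. It is taken in the weak dual, where the
weak topology on probability measures corresponds to the weak-* topology. -/
def integralFunctional (P : ProbabilityMeasure X) : WeakDual ℝ C(X, ℝ) :=
  StrongDual.toWeakDual <|
    (L1.integralCLM' ℝ).comp (ContinuousMap.toLp 1 (P : Measure X) ℝ)

theorem integralFunctional_apply (P : ProbabilityMeasure X) (f : C(X, ℝ)) :
    integralFunctional P f = ∫ x, f x ∂P :=
  calc integralFunctional P f = L1.integral (ContinuousMap.toLp 1 (P : Measure X) ℝ f) :=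
        (L1.integral_eq _).symm
    _ = ∫ x, ContinuousMap.toLp 1 (P : Measure X) ℝ f x ∂P := L1.integral_eq_integral _
    _ = ∫ x, f x ∂P := integral_congr_ae (ContinuousMap.coeFn_toLp (P : Measure X) f)

theorem integralFunctional_dirac (x : X) (f : C(X, ℝ)) :
    integralFunctional (diracProba x) f = f x := by
  rw [integralFunctional_apply]
  exact integral_dirac' _ _ f.continuous.stronglyMeasurable

theorem isCompact_range_integralFunctional [T2Space X] :
    IsCompact (range (integralFunctional (X := X))) := by
  refine isCompact_range (WeakDual.continuous_of_continuous_eval fun f => ?_)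
  simp_rw [integralFunctional_apply]
  exact ProbabilityMeasure.continuous_integral_continuousMap f

theorem convex_range_integralFunctional :
    Convex ℝ (range (integralFunctional (X := X))) := by
  rintro _ ⟨P, rfl⟩ _ ⟨Q, rfl⟩ s t hs ht hst
  let M : Measure X := ENNReal.ofReal s • (P : Measure X) + ENNReal.ofReal t • (Q : Measure X)
  have hM : IsProbabilityMeasure M := ⟨by
    simp only [M, Measure.add_apply, Measure.smul_apply, measure_univ, smul_eq_mul, mul_one]
    rw [← ENNReal.ofReal_add hs ht, hst, ENNReal.ofReal_one]⟩
  refine ⟨⟨M, hM⟩, DFunLike.ext _ _ fun f => ?_⟩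
  have hP := (integrable_continuousMap (P : Measure X) f).smul_measure
    (ENNReal.ofReal_ne_top (r := s))
  have hQ := (integrable_continuousMap (Q : Measure X) f).smul_measure
    (ENNReal.ofReal_ne_top (r := t))
  calc integralFunctional ⟨M, hM⟩ f = ∫ x, f x ∂M := integralFunctional_apply _ f
    _ = s * ∫ x, f x ∂P + t * ∫ x, f x ∂Q := by
      rw [integral_add_measure hP hQ, integral_smul_measure, integral_smul_measure,
        ENNReal.toReal_ofReal hs, ENNReal.toReal_ofReal ht, smul_eq_mul, smul_eq_mul]
    _ = s * integralFunctional P f + t * integralFunctional Q f := by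
      rw [integralFunctional_apply, integralFunctional_apply]

theorem exists_integralFunctional_sub_eq_two_smul [T2Space X] [Nonempty X]
    {l : StrongDual ℝ C(X, ℝ)} (hl_norm : ‖l‖ ≤ 1) (hl_one : l 1 = 0) :
    ∃ P Q : ProbabilityMeasure X,
      integralFunctional P - integralFunctional Q = StrongDual.toWeakDual ((2 : ℝ) • l) := by
  have hconvex := convex_range_integralFunctional (X := X)
  have hcompact := isCompact_range_integralFunctional (X := X)
  have hclosed : IsClosed (range (integralFunctional (X := X)) - range integralFunctional) := by
    rw [sub_eq_add_neg]
    exact (hcompact.add hcompact.neg).isClosed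
  suffices hmem : StrongDual.toWeakDual ((2 : ℝ) • l) ∈
      range (integralFunctional (X := X)) - range integralFunctional by
    obtain ⟨_, ⟨P, rfl⟩, _, ⟨Q, rfl⟩, hPQ⟩ := hmem
    exact ⟨P, Q, hPQ⟩
  refine mem_of_convex_isClosed_of_forall_exists_le (hconvex.sub hconvex) hclosed fun f => ?_
  obtain ⟨x, y, c, hxy⟩ := exists_two_mul_norm_sub_const_le f
  refine ⟨_, sub_mem_sub (mem_range_self (diracProba x)) (mem_range_self (diracProba y)), ?_⟩
  have hl_const : l (ContinuousMap.const X c) = 0 := by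
    rw [show ContinuousMap.const X c = c • 1 by ext; simp, map_smul, hl_one, smul_zero]
  calc 2 * l f = 2 * l (f - ContinuousMap.const X c) := by rw [map_sub, hl_const, sub_zero]
    _ ≤ 2 * ‖f - ContinuousMap.const X c‖ := by
      gcongr
      simpa using (le_abs_self _).trans (l.le_of_opNorm_le hl_norm (f - ContinuousMap.const X c))
    _ ≤ f x - f y := hxy
    _ = (integralFunctional (diracProba x) - integralFunctional (diracProba y)) f :=
      congrArg₂ (· - ·) (integralFunctional_dirac x f).symm (integralFunctional_dirac y f).symm

theorem integral_sub_integral_le_two_mul_infDist {V : Submodule ℝ C(X, ℝ)}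
    {P Q : ProbabilityMeasure X} (hPQ : ∀ v ∈ V, ∫ x, v x ∂P = ∫ x, v x ∂Q) (g : C(X, ℝ)) :
    ∫ x, g x ∂P - ∫ x, g x ∂Q ≤ 2 * infDist g V := by
  rw [← div_le_iff₀' two_pos, le_infDist ⟨0, V.zero_mem⟩]
  intro v hv
  rw [div_le_iff₀' two_pos, dist_eq_norm]
  have hsub (N : ProbabilityMeasure X) :
      ∫ x, (g - v) x ∂N = ∫ x, g x ∂N - ∫ x, v x ∂N :=
    integral_sub (integrable_continuousMap N g) (integrable_continuousMap N v)
  calc ∫ x, g x ∂P - ∫ x, g x ∂Q = ∫ x, (g - v) x ∂P - ∫ x, (g - v) x ∂Q := by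
        rw [hsub, hsub, hPQ v hv]; ring
    _ ≤ ‖g - v‖ + ‖g - v‖ := by
        linarith [abs_le.1 (abs_integral_le_norm P (g - v)),
          abs_le.1 (abs_integral_le_norm Q (g - v))]
    _ = 2 * ‖g - v‖ := (two_mul _).symm

end Compact

/-- The restrictions to `s` of the real polynomials of degree at most `L`, as a subspace of the
continuous functions on `s`: the approximants over which `bestApproxError` is minimized. -/
def polynomialFunctionsDegreeLE (s : Set ℝ) (L : ℕ) : Submodule ℝ C(s, ℝ) :=
  (Polynomial.degreeLE ℝ L).map (Polynomial.toContinuousMapOnAlgHom s).toLinearMap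

theorem one_mem_polynomialFunctionsDegreeLE (s : Set ℝ) (L : ℕ) :
    1 ∈ polynomialFunctionsDegreeLE s L :=
  ⟨1, Polynomial.mem_degreeLE.2 (Polynomial.degree_one_le.trans (by simp)),
    map_one (Polynomial.toContinuousMapOnAlgHom s)⟩

theorem bestApproxError_eq_infDist {a b : ℝ} {g : ℝ → ℝ} (hg : ContinuousOn g (Icc a b)) (L : ℕ) :
    bestApproxError L g a b = infDist (⟨(Icc a b).domRestrict g, hg.domRestrict⟩ : C(Icc a b, ℝ))
      (polynomialFunctionsDegreeLE (Icc a b) L) := by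
  rw [bestApproxError, infDist_eq_iInf]
  refine Function.Surjective.iInf_congr
    (fun p => ⟨p.1.toContinuousMapOn _, p.1, ?_, rfl⟩) ?_ fun p => ?_
  · exact Polynomial.mem_degreeLE.2 (Polynomial.natDegree_le_iff_degree_le.1 p.2)
  · rintro ⟨_, p, hp, rfl⟩
    exact ⟨⟨p, Polynomial.natDegree_le_iff_degree_le.2 (Polynomial.mem_degreeLE.1 hp)⟩, rfl⟩
  · rw [ContinuousMap.dist_eq_iSup]; rfl

theorem polynomialFunctionsDegreeLE_eq_span (s : Set ℝ) (L : ℕ) :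
    polynomialFunctionsDegreeLE s L =
      Submodule.span ℝ ((fun j : ℕ => (Polynomial.X ^ j).toContinuousMapOn s) '' Iic L) := by
  classical
  rw [polynomialFunctionsDegreeLE, Polynomial.degreeLE_eq_span_X_pow, Submodule.map_span,
    Finset.coe_image, image_image]
  congr 2
  ext
  simp

theorem forall_mem_polynomialFunctionsDegreeLE_integral_eq_iff {s : Set ℝ} [CompactSpace s]
    {P Q : ProbabilityMeasure s} {L : ℕ} :
    (∀ v ∈ polynomialFunctionsDegreeLE s L, ∫ x, v x ∂P = ∫ x, v x ∂Q) ↔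
      ∀ j, 1 ≤ j → j ≤ L →
        ∫ x, (x : ℝ) ^ j ∂(P : Measure s) = ∫ x, (x : ℝ) ^ j ∂(Q : Measure s) := by
  have hmoment (N : ProbabilityMeasure s) (j : ℕ) :
      integralFunctional N ((Polynomial.X ^ j).toContinuousMapOn s) =
        ∫ x, (x : ℝ) ^ j ∂(N : Measure s) := by
    simp [integralFunctional_apply]
  simp_rw [← integralFunctional_apply, polynomialFunctionsDegreeLE_eq_span]
  have hspan := LinearMap.eqOn_span_iff
    (s := (fun j : ℕ => (Polynomial.X ^ j).toContinuousMapOn s) '' Iic L)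
    (f := (integralFunctional P).toLinearMap) (g := (integralFunctional Q).toLinearMap)
  refine hspan.trans (forall_mem_image.trans (forall_congr' fun j => ?_))
  change j ≤ L → integralFunctional P _ = integralFunctional Q _ ↔ _
  rw [hmoment, hmoment]
  rcases Nat.eq_zero_or_pos j with rfl | hj
  · simp
  · exact ⟨fun h _ => h, fun h => h hj⟩

theorem exists_map_subtype_val_eq_iff {Y : Type*} [MeasurableSpace Y] {s : Set Y}
    (hs : MeasurableSet s) {μ : Measure Y} :
    (∃ P : ProbabilityMeasure s, (P : Measure s).map Subtype.val = μ) ↔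
      IsProbabilityMeasure μ ∧ ∀ᵐ x ∂μ, x ∈ s := by
  constructor
  · rintro ⟨P, rfl⟩
    refine ⟨Measure.isProbabilityMeasure_map (by fun_prop), ?_⟩
    rw [(MeasurableEmbedding.subtype_coe hs).ae_map_iff]
    exact .of_forall fun x => x.2
  · rintro ⟨hμ, hμs⟩
    refine ⟨⟨μ.comap Subtype.val, ?_⟩, ?_⟩
    · exact (MeasurableEmbedding.subtype_coe hs).isProbabilityMeasure_comap (by simpa using hμs)
    · exact (map_comap_subtype_coe hs μ).trans (Measure.restrict_eq_self_of_ae_mem hμs)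

theorem setOf_moment_matching_eq {s : Set ℝ} [CompactSpace s] {g : ℝ → ℝ} (hg : ContinuousOn g s)
    (L : ℕ) :
    {d : ℝ | ∃ μ μ' : Measure ℝ,
        IsProbabilityMeasure μ ∧ IsProbabilityMeasure μ' ∧
        (∀ᵐ x ∂μ, x ∈ s) ∧ (∀ᵐ x ∂μ', x ∈ s) ∧
        (∀ j : ℕ, 1 ≤ j → j ≤ L → ∫ x, x ^ j ∂μ = ∫ x, x ^ j ∂μ') ∧
        d = (∫ x, g x ∂μ) - ∫ x, g x ∂μ'} =
      {d : ℝ | ∃ P Q : ProbabilityMeasure s,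
        (∀ v ∈ polynomialFunctionsDegreeLE s L, ∫ x, v x ∂P = ∫ x, v x ∂Q) ∧
        d = ∫ x, (⟨s.domRestrict g, hg.domRestrict⟩ : C(s, ℝ)) x ∂P -
          ∫ x, (⟨s.domRestrict g, hg.domRestrict⟩ : C(s, ℝ)) x ∂Q} := by
  have hs : MeasurableSet s := (isCompact_iff_compactSpace.2 ‹_›).measurableSet
  have hmap (N : ProbabilityMeasure s) (f : ℝ → ℝ) :
      ∫ x, f x ∂(N : Measure s).map Subtype.val = ∫ x, f x ∂(N : Measure s) :=
    (MeasurableEmbedding.subtype_coe hs).integral_map f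
  ext d
  simp only [forall_mem_polynomialFunctionsDegreeLE_integral_eq_iff]
  constructor
  · rintro ⟨μ, μ', hμ, hμ', hμs, hμs', hmoments, hd⟩
    obtain ⟨P, rfl⟩ := (exists_map_subtype_val_eq_iff hs).2 ⟨hμ, hμs⟩
    obtain ⟨Q, rfl⟩ := (exists_map_subtype_val_eq_iff hs).2 ⟨hμ', hμs'⟩
    simp only [hmap] at hmoments hd
    exact ⟨P, Q, hmoments, hd⟩
  · rintro ⟨P, Q, hmoments, hd⟩
    obtain ⟨hP, hPs⟩ := (exists_map_subtype_val_eq_iff hs).1 ⟨P, rfl⟩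
    obtain ⟨hQ, hQs⟩ := (exists_map_subtype_val_eq_iff hs).1 ⟨Q, rfl⟩
    refine ⟨_, _, hP, hQ, hPs, hQs, ?_⟩
    simp only [hmap]
    exact ⟨hmoments, hd⟩

theorem moment_matching_duality_general {X : Type*} [TopologicalSpace X] [CompactSpace X]
    [T2Space X] [Nonempty X] [MeasurableSpace X] [BorelSpace X] {V : Submodule ℝ C(X, ℝ)}
    (hV : 1 ∈ V) (g : C(X, ℝ)) :
    IsGreatest
      {d : ℝ | ∃ P Q : ProbabilityMeasure X, (∀ v ∈ V, ∫ x, v x ∂P = ∫ x, v x ∂Q) ∧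
        d = ∫ x, g x ∂P - ∫ x, g x ∂Q}
      (2 * infDist g V) := by
  refine ⟨?_, fun d ⟨P, Q, hPQ, hd⟩ => hd ▸ integral_sub_integral_le_two_mul_infDist hPQ g⟩
  obtain ⟨l, hl_norm, hlV, hlg⟩ := exists_dual_eq_infDist ℝ V g
  obtain ⟨P, Q, hPQ⟩ := exists_integralFunctional_sub_eq_two_smul hl_norm (hlV 1 hV)
  have hint (f : C(X, ℝ)) : ∫ x, f x ∂P - ∫ x, f x ∂Q = 2 * l f := by
    rw [← integralFunctional_apply, ← integralFunctional_apply]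
    exact DFunLike.congr_fun hPQ f
  refine ⟨P, Q, fun v hv => ?_, ?_⟩
  · rw [← sub_eq_zero, hint, hlV v hv, mul_zero]
  · rw [hint, hlg]; rfl

/-- duality between moment matching and best polynomial approximation. -/
theorem moment_matching_duality
    (a b : ℝ) (hab : a < b) (g : ℝ → ℝ) (hg : ContinuousOn g (Set.Icc a b)) (L : ℕ) :
    IsGreatest
      {d : ℝ | ∃ μ μ' : Measure ℝ,
        IsProbabilityMeasure μ ∧ IsProbabilityMeasure μ' ∧
        (∀ᵐ x ∂μ, x ∈ Set.Icc a b) ∧ (∀ᵐ x ∂μ', x ∈ Set.Icc a b) ∧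
        (∀ j : ℕ, 1 ≤ j → j ≤ L → ∫ x, x ^ j ∂μ = ∫ x, x ^ j ∂μ') ∧
        d = (∫ x, g x ∂μ) - ∫ x, g x ∂μ'}
      (2 * bestApproxError L g a b) := by
  have : Nonempty (Icc a b) := (nonempty_Icc.2 hab.le).to_subtype
  rw [setOf_moment_matching_eq hg, bestApproxError_eq_infDist hg]
  exact moment_matching_duality_general (one_mem_polynomialFunctionsDegreeLE _ L) _
end
end
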